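/- Type-and-coeffect preservation of the CBN translation of the graded λ-calculus: if γ·Γ ⊢ e : τ in the graded source λ-calculus, then γ·⟦Γ⟧n ⊢ ⟦e⟧n : ⟦τ⟧n in CBPV with coeffects (with the same grade vector γ). -/

import Mathlib

set_option autoImplicit false

/-- A preordered semiring of grades `(Q, +, 0, ·, 1, ≤co)`,
where `≤co` is a preorder respected by `+` and `·`. -/
structure CoSig (Q : Type) where
  add : Q → Q → Q
  zero : Q
  mul : Q → Q → Q
  one : Q
  le : Q → Q → Prop
  add_assoc : ∀ a b c, add (add a b) c = add a (add b c)
  add_comm : ∀ a b, add a b = add b a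
  add_zero : ∀ a, add a zero = a
  mul_assoc : ∀ a b c, mul (mul a b) c = mul a (mul b c)
  one_mul : ∀ a, mul one a = a
  mul_one : ∀ a, mul a one = a
  zero_mul : ∀ a, mul zero a = zero
  mul_zero : ∀ a, mul a zero = zero
  left_distrib : ∀ a b c, mul a (add b c) = add (mul a b) (mul a c)
  right_distrib : ∀ a b c, mul (add a b) c = add (mul a c) (mul b c)
  le_refl : ∀ a, le a a
  le_trans : ∀ a b c, le a b → le b c → le a c
  add_le_add : ∀ a b c d, le a b → le c d → le (add a c) (add b d)
  mul_le_mul : ∀ a b c d, le a b → le c d → le (mul a c) (mul b d)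

namespace CBPVCo

/-- Pointwise comparison of grade vectors: `γ₁ ≤co γ₂`. -/
def vle {Q : Type} (S : CoSig Q) (γ₁ γ₂ : List Q) : Prop := List.Forall₂ S.le γ₁ γ₂

/-- Pointwise addition of grade vectors. -/
def vadd {Q : Type} (S : CoSig Q) (γ₁ γ₂ : List Q) : List Q := List.zipWith S.add γ₁ γ₂

/-- Pointwise scaling of a grade vector: `q·γ`. -/
def vscale {Q : Type} (S : CoSig Q) (q : Q) (γ : List Q) : List Q := γ.map (S.mul q)

/-- `γ ≤co 0̄`: every entry of the grade vector is discardable. -/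
def leZero {Q : Type} (S : CoSig Q) (γ : List Q) : Prop := ∀ q ∈ γ, S.le q S.zero

mutual
/-- CBPV value types (coeffect version): `unit`, thunks `U B`, positive products, sums. -/
inductive VTy (Q : Type) : Type where
  | unit : VTy Q
  | thunk : CTy Q → VTy Q
  | prod : VTy Q → VTy Q → VTy Q
  | sum : VTy Q → VTy Q → VTy Q
/-- CBPV computation types (coeffect version): graded functions `A^q → B`,
graded returners `F_q A`, negative products. -/
inductive CTy (Q : Type) : Type where
  | arr : VTy Q → Q → CTy Q → CTy Q
  | F : Q → VTy Q → CTy Q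
  | wth : CTy Q → CTy Q → CTy Q
end

mutual
/-- CBPV values (de Bruijn indices for variables). -/
inductive Val (Q : Type) : Type where
  | var : Nat → Val Q
  | unit : Val Q
  | thunk : Comp Q → Val Q
  | pair : Val Q → Val Q → Val Q
  | inl : Val Q → Val Q
  | inr : Val Q → Val Q
/-- CBPV computations, with grade annotations on binders and on `return`. -/
inductive Comp (Q : Type) : Type where
  | lam : Q → Comp Q → Comp Q
  | app : Comp Q → Val Q → Comp Q
  | force : Val Q → Comp Q
  | split : Q → Val Q → Comp Q → Comp Q
  | cpair : Comp Q → Comp Q → Comp Q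
  | fst : Comp Q → Comp Q
  | snd : Comp Q → Comp Q
  | ret : Q → Val Q → Comp Q
  | letin : Q → Comp Q → Comp Q → Comp Q
  | seq : Val Q → Comp Q → Comp Q
  | case : Q → Val Q → Comp Q → Comp Q → Comp Q
end

mutual
/-- The value typing judgment `γ·Γ ⊢ V : A` of the CBPV type-and-coeffect system. -/
inductive VHasTy {Q : Type} (S : CoSig Q) : List Q → List (VTy Q) → Val Q → VTy Q → Prop where
  | var : ∀ {γ : List Q} {Γ : List (VTy Q)} {x : Nat} {q : Q} {A : VTy Q},
      γ.length = Γ.length → Γ[x]? = some A → γ[x]? = some q → S.le q S.one →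
      (∀ (i : Nat) (q' : Q), i ≠ x → γ[i]? = some q' → S.le q' S.zero) →
      VHasTy S γ Γ (.var x) A
  | unit : ∀ {γ : List Q} {Γ : List (VTy Q)},
      γ.length = Γ.length → leZero S γ → VHasTy S γ Γ .unit .unit
  | thunk : ∀ {γ : List Q} {Γ : List (VTy Q)} {M : Comp Q} {B : CTy Q},
      CHasTy S γ Γ M B → VHasTy S γ Γ (.thunk M) (.thunk B)
  | pair : ∀ {γ γ₁ γ₂ : List Q} {Γ : List (VTy Q)} {V₁ V₂ : Val Q} {A₁ A₂ : VTy Q},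
      VHasTy S γ₁ Γ V₁ A₁ → VHasTy S γ₂ Γ V₂ A₂ → vle S γ (vadd S γ₁ γ₂) →
      VHasTy S γ Γ (.pair V₁ V₂) (.prod A₁ A₂)
  | inl : ∀ {γ : List Q} {Γ : List (VTy Q)} {V : Val Q} {A₁ A₂ : VTy Q},
      VHasTy S γ Γ V A₁ → VHasTy S γ Γ (.inl V) (.sum A₁ A₂)
  | inr : ∀ {γ : List Q} {Γ : List (VTy Q)} {V : Val Q} {A₁ A₂ : VTy Q},
      VHasTy S γ Γ V A₂ → VHasTy S γ Γ (.inr V) (.sum A₁ A₂)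

/-- The computation typing judgment `γ·Γ ⊢ M : B` of the CBPV type-and-coeffect system. -/
inductive CHasTy {Q : Type} (S : CoSig Q) : List Q → List (VTy Q) → Comp Q → CTy Q → Prop where
  | lam : ∀ {γ : List Q} {Γ : List (VTy Q)} {q : Q} {A : VTy Q} {M : Comp Q} {B : CTy Q},
      CHasTy S (q :: γ) (A :: Γ) M B → CHasTy S γ Γ (.lam q M) (.arr A q B)
  | app : ∀ {γ γ₁ γ₂ : List Q} {Γ : List (VTy Q)} {M : Comp Q} {V : Val Q}
      {A : VTy Q} {q : Q} {B : CTy Q},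
      CHasTy S γ₁ Γ M (.arr A q B) → VHasTy S γ₂ Γ V A →
      vle S γ (vadd S γ₁ (vscale S q γ₂)) → CHasTy S γ Γ (.app M V) B
  | force : ∀ {γ : List Q} {Γ : List (VTy Q)} {V : Val Q} {B : CTy Q},
      VHasTy S γ Γ V (.thunk B) → CHasTy S γ Γ (.force V) B
  | ret : ∀ {γ γ₁ : List Q} {Γ : List (VTy Q)} {q : Q} {V : Val Q} {A : VTy Q},
      VHasTy S γ₁ Γ V A → vle S γ (vscale S q γ₁) → CHasTy S γ Γ (.ret q V) (.F q A)
  | letin : ∀ {γ γ₁ γ₂ : List Q} {Γ : List (VTy Q)} {q₁ q₂ : Q} {M N : Comp Q}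
      {A : VTy Q} {B : CTy Q},
      CHasTy S γ₁ Γ M (.F q₁ A) → CHasTy S (S.mul q₁ q₂ :: γ₂) (A :: Γ) N B →
      vle S γ (vadd S (vscale S q₂ γ₁) γ₂) → CHasTy S γ Γ (.letin q₂ M N) B
  | split : ∀ {γ γ₁ γ₂ : List Q} {Γ : List (VTy Q)} {q : Q} {V : Val Q}
      {A₁ A₂ : VTy Q} {N : Comp Q} {B : CTy Q},
      VHasTy S γ₁ Γ V (.prod A₁ A₂) → CHasTy S (q :: q :: γ₂) (A₂ :: A₁ :: Γ) N B →
      vle S γ (vadd S (vscale S q γ₁) γ₂) → CHasTy S γ Γ (.split q V N) B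
  | cpair : ∀ {γ : List Q} {Γ : List (VTy Q)} {M₁ M₂ : Comp Q} {B₁ B₂ : CTy Q},
      CHasTy S γ Γ M₁ B₁ → CHasTy S γ Γ M₂ B₂ → CHasTy S γ Γ (.cpair M₁ M₂) (.wth B₁ B₂)
  | fst : ∀ {γ : List Q} {Γ : List (VTy Q)} {M : Comp Q} {B₁ B₂ : CTy Q},
      CHasTy S γ Γ M (.wth B₁ B₂) → CHasTy S γ Γ (.fst M) B₁
  | snd : ∀ {γ : List Q} {Γ : List (VTy Q)} {M : Comp Q} {B₁ B₂ : CTy Q},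
      CHasTy S γ Γ M (.wth B₁ B₂) → CHasTy S γ Γ (.snd M) B₂
  | seq : ∀ {γ γ₁ γ₂ : List Q} {Γ : List (VTy Q)} {V : Val Q} {M : Comp Q} {B : CTy Q},
      VHasTy S γ₁ Γ V .unit → CHasTy S γ₂ Γ M B → vle S γ (vadd S γ₁ γ₂) →
      CHasTy S γ Γ (.seq V M) B
  | case : ∀ {γ γ₁ γ₂ : List Q} {Γ : List (VTy Q)} {q : Q} {V : Val Q}
      {A₁ A₂ : VTy Q} {M₁ M₂ : Comp Q} {B : CTy Q},
      VHasTy S γ₁ Γ V (.sum A₁ A₂) → CHasTy S (q :: γ₂) (A₁ :: Γ) M₁ B →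
      CHasTy S (q :: γ₂) (A₂ :: Γ) M₂ B → S.le q S.one →
      vle S γ (vadd S (vscale S q γ₁) γ₂) → CHasTy S γ Γ (.case q V M₁ M₂) B
end

/-- Lifting a de Bruijn renaming under one binder. -/
def liftRen (f : Nat → Nat) : Nat → Nat
  | 0 => 0
  | n + 1 => f n + 1

mutual
/-- Renaming of values. -/
def Val.rename {Q : Type} : Val Q → (Nat → Nat) → Val Q
  | .var x, f => .var (f x)
  | .unit, _ => .unit
  | .thunk M, f => .thunk (M.rename f)
  | .pair V₁ V₂, f => .pair (V₁.rename f) (V₂.rename f)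
  | .inl V, f => .inl (V.rename f)
  | .inr V, f => .inr (V.rename f)
/-- Renaming of computations. -/
def Comp.rename {Q : Type} : Comp Q → (Nat → Nat) → Comp Q
  | .lam q M, f => .lam q (M.rename (liftRen f))
  | .app M V, f => .app (M.rename f) (V.rename f)
  | .force V, f => .force (V.rename f)
  | .split q V N, f => .split q (V.rename f) (N.rename (liftRen (liftRen f)))
  | .cpair M₁ M₂, f => .cpair (M₁.rename f) (M₂.rename f)
  | .fst M, f => .fst (M.rename f)
  | .snd M, f => .snd (M.rename f)
  | .ret q V, f => .ret q (V.rename f)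
  | .letin q M N, f => .letin q (M.rename f) (N.rename (liftRen f))
  | .seq V M, f => .seq (V.rename f) (M.rename f)
  | .case q V M₁ M₂, f => .case q (V.rename f) (M₁.rename (liftRen f)) (M₂.rename (liftRen f))
end

/-- Weakening: shift all free variables up by one. -/
def shift {Q : Type} (M : Comp Q) : Comp Q := M.rename Nat.succ

/-- Weakening under one binder. -/
def shift1 {Q : Type} (M : Comp Q) : Comp Q := M.rename (liftRen Nat.succ)

/-- Weakening under two binders. -/
def shift2 {Q : Type} (M : Comp Q) : Comp Q := M.rename (liftRen (liftRen Nat.succ))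

end CBPVCo

namespace LamCo

/-- Types of the graded source λ-calculus (CBN version, with `&`-products):
graded functions, with-products, sums and the graded modal type `□_q τ`. -/
inductive STy (Q : Type) : Type where
  | unit : STy Q
  | arr : STy Q → Q → STy Q → STy Q
  | wth : STy Q → STy Q → STy Q
  | sum : STy Q → STy Q → STy Q
  | box : Q → STy Q → STy Q

/-- Terms of the graded source λ-calculus (de Bruijn indices). -/
inductive STm (Q : Type) : Type where
  | var : Nat → STm Q
  | lam : Q → STm Q → STm Q
  | app : STm Q → STm Q → STm Q
  | unit : STm Q
  | seq : STm Q → STm Q → STm Q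
  | wpair : STm Q → STm Q → STm Q
  | fst : STm Q → STm Q
  | snd : STm Q → STm Q
  | inl : STm Q → STm Q
  | inr : STm Q → STm Q
  | case : Q → STm Q → STm Q → STm Q → STm Q
  | box : Q → STm Q → STm Q
  | unbox : Q → STm Q → STm Q → STm Q

open CBPVCo in
/-- The type-and-coeffect judgment `γ·Γ ⊢ e : τ` of the graded source λ-calculus. -/
inductive HasTy {Q : Type} (S : CoSig Q) : List Q → List (STy Q) → STm Q → STy Q → Prop where
  | var : ∀ {γ : List Q} {Γ : List (STy Q)} {x : Nat} {q : Q} {τ : STy Q},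
      γ.length = Γ.length → Γ[x]? = some τ → γ[x]? = some q → S.le q S.one →
      (∀ (i : Nat) (q' : Q), i ≠ x → γ[i]? = some q' → S.le q' S.zero) →
      HasTy S γ Γ (.var x) τ
  | lam : ∀ {γ : List Q} {Γ : List (STy Q)} {q : Q} {e : STm Q} {τ₁ τ₂ : STy Q},
      HasTy S (q :: γ) (τ₁ :: Γ) e τ₂ → HasTy S γ Γ (.lam q e) (.arr τ₁ q τ₂)
  | app : ∀ {γ γ₁ γ₂ : List Q} {Γ : List (STy Q)} {e₁ e₂ : STm Q} {τ₁ τ₂ : STy Q} {q : Q},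
      HasTy S γ₁ Γ e₁ (.arr τ₁ q τ₂) → HasTy S γ₂ Γ e₂ τ₁ →
      vle S γ (vadd S γ₁ (vscale S q γ₂)) → HasTy S γ Γ (.app e₁ e₂) τ₂
  | unit : ∀ {γ : List Q} {Γ : List (STy Q)},
      γ.length = Γ.length → leZero S γ → HasTy S γ Γ .unit .unit
  | seq : ∀ {γ γ₁ γ₂ : List Q} {Γ : List (STy Q)} {e₁ e₂ : STm Q} {τ : STy Q},
      HasTy S γ₁ Γ e₁ .unit → HasTy S γ₂ Γ e₂ τ → vle S γ (vadd S γ₁ γ₂) →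
      HasTy S γ Γ (.seq e₁ e₂) τ
  | wpair : ∀ {γ : List Q} {Γ : List (STy Q)} {e₁ e₂ : STm Q} {τ₁ τ₂ : STy Q},
      HasTy S γ Γ e₁ τ₁ → HasTy S γ Γ e₂ τ₂ → HasTy S γ Γ (.wpair e₁ e₂) (.wth τ₁ τ₂)
  | fst : ∀ {γ : List Q} {Γ : List (STy Q)} {e : STm Q} {τ₁ τ₂ : STy Q},
      HasTy S γ Γ e (.wth τ₁ τ₂) → HasTy S γ Γ (.fst e) τ₁
  | snd : ∀ {γ : List Q} {Γ : List (STy Q)} {e : STm Q} {τ₁ τ₂ : STy Q},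
      HasTy S γ Γ e (.wth τ₁ τ₂) → HasTy S γ Γ (.snd e) τ₂
  | inl : ∀ {γ : List Q} {Γ : List (STy Q)} {e : STm Q} {τ₁ τ₂ : STy Q},
      HasTy S γ Γ e τ₁ → HasTy S γ Γ (.inl e) (.sum τ₁ τ₂)
  | inr : ∀ {γ : List Q} {Γ : List (STy Q)} {e : STm Q} {τ₁ τ₂ : STy Q},
      HasTy S γ Γ e τ₂ → HasTy S γ Γ (.inr e) (.sum τ₁ τ₂)
  | case : ∀ {γ γ₁ γ₂ : List Q} {Γ : List (STy Q)} {q : Q} {e e₁ e₂ : STm Q}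
      {τ₁ τ₂ τ : STy Q},
      HasTy S γ₁ Γ e (.sum τ₁ τ₂) → HasTy S (q :: γ₂) (τ₁ :: Γ) e₁ τ →
      HasTy S (q :: γ₂) (τ₂ :: Γ) e₂ τ → S.le q S.one →
      vle S γ (vadd S (vscale S q γ₁) γ₂) → HasTy S γ Γ (.case q e e₁ e₂) τ
  | box : ∀ {γ γ₁ : List Q} {Γ : List (STy Q)} {q : Q} {e : STm Q} {τ : STy Q},
      HasTy S γ₁ Γ e τ → vle S γ (vscale S q γ₁) → HasTy S γ Γ (.box q e) (.box q τ)
  | unbox : ∀ {γ γ₁ γ₂ : List Q} {Γ : List (STy Q)} {q₁ q₂ : Q} {e₁ e₂ : STm Q}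
      {τ τ' : STy Q},
      HasTy S γ₁ Γ e₁ (.box q₁ τ) → HasTy S (S.mul q₁ q₂ :: γ₂) (τ :: Γ) e₂ τ' →
      vle S γ (vadd S (vscale S q₂ γ₁) γ₂) → HasTy S γ Γ (.unbox q₂ e₁ e₂) τ'

end LamCo

open CBPVCo LamCo

/-- CBN translation of graded source types into CBPV computation types;
the graded modal type is translated as `⟦□_q τ⟧n = F_q (U ⟦τ⟧n)`. -/
def tyTransN {Q : Type} (S : CoSig Q) : STy Q → CTy Q
  | .unit => .F S.one .unit
  | .arr τ₁ q τ₂ => .arr (.thunk (tyTransN S τ₁)) q (tyTransN S τ₂)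
  | .wth τ₁ τ₂ => .wth (tyTransN S τ₁) (tyTransN S τ₂)
  | .sum τ₁ τ₂ => .F S.one (.sum (.thunk (tyTransN S τ₁)) (.thunk (tyTransN S τ₂)))
  | .box q τ => .F q (.thunk (tyTransN S τ))

/-- Levy's CBN translation of graded source terms into CBPV computations,
extended with the graded modal operations `box` and `unbox`. -/
def tmTransN {Q : Type} (S : CoSig Q) : STm Q → Comp Q
  | .var x => .force (.var x)
  | .lam q e => .lam q (tmTransN S e)
  | .app e₁ e₂ => .app (tmTransN S e₁) (.thunk (tmTransN S e₂))
  | .unit => .ret S.one .unit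
  | .seq e₁ e₂ => .letin S.one (tmTransN S e₁) (.seq (.var 0) (shift (tmTransN S e₂)))
  | .wpair e₁ e₂ => .cpair (tmTransN S e₁) (tmTransN S e₂)
  | .fst e => .fst (tmTransN S e)
  | .snd e => .snd (tmTransN S e)
  | .inl e => .ret S.one (.inl (.thunk (tmTransN S e)))
  | .inr e => .ret S.one (.inr (.thunk (tmTransN S e)))
  | .case q e e₁ e₂ =>
      .letin q (tmTransN S e)
        (.case q (.var 0) (shift1 (tmTransN S e₁)) (shift1 (tmTransN S e₂)))
  | .box q e => .ret q (.thunk (tmTransN S e))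
  | .unbox q₂ e₁ e₂ => .letin q₂ (tmTransN S e₁) (tmTransN S e₂)

/-!
By induction on the source derivation, each source rule becomes the matching target rules with the
same grade vectors, using `1 · γ = γ` wherever a `return₁` is introduced. Only sequencing and
`case` need more: their translations bind the scrutinee to a fresh variable `0` that is used at
once, under which the remaining computations are shifted. Weakening types the shifted computations
with grade `0` at the new variable, and the variable itself is typed with the unit vector
`1, 0, …, 0`. Both sides recombine exactly because `q · (1, 0, …, 0) + (0, γ) = (q, γ)`.
-/

namespace CBPVCo

section ListInsertion

variable {α β δ : Type*}

theorem zipWith_insertIdx (f : α → β → δ) (a : α) (b : β) :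
    ∀ (k : ℕ) (l : List α) (m : List β),
      List.zipWith f (l.insertIdx k a) (m.insertIdx k b) =
        (List.zipWith f l m).insertIdx k (f a b)
  | 0, _, _ => rfl
  | _ + 1, [], _ => by simp
  | _ + 1, _ :: _, [] => by simp
  | k + 1, _ :: l, _ :: m => by simp [zipWith_insertIdx f a b k l m]

theorem forall₂_insertIdx {R : α → β → Prop} {a : α} {b : β} (hab : R a b) :
    ∀ (k : ℕ) {l : List α} {m : List β},
      List.Forall₂ R l m → List.Forall₂ R (l.insertIdx k a) (m.insertIdx k b)
  | 0, _, _, h => .cons hab h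
  | _ + 1, _, _, .nil => .nil
  | k + 1, _, _, .cons hhead htail => .cons hhead (forall₂_insertIdx hab k htail)

/-- The renaming of de Bruijn indices that makes room for a new variable at position `k`: indices
below `k` are kept and all others increase by one. The recursion follows `liftRen`, so that going
under a binder replaces `k` by `k + 1` definitionally. -/
def shiftFrom : ℕ → ℕ → ℕ
  | 0 => Nat.succ
  | k + 1 => liftRen (shiftFrom k)

theorem getElem?_insertIdx_shiftFrom (a : α) :
    ∀ (k : ℕ) (l : List α) (x : ℕ), (l.insertIdx k a)[shiftFrom k x]? = l[x]?
  | 0, _, _ => by simp [shiftFrom]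
  | _ + 1, [], _ => by simp
  | _ + 1, _ :: _, 0 => by simp [shiftFrom, liftRen]
  | k + 1, _ :: l, x + 1 => by
      simpa [shiftFrom, liftRen] using getElem?_insertIdx_shiftFrom a k l x

theorem eq_or_exists_shiftFrom_of_getElem?_insertIdx {a c : α} :
    ∀ {k : ℕ} {l : List α} {i : ℕ}, (l.insertIdx k a)[i]? = some c →
      c = a ∨ ∃ j, shiftFrom k j = i ∧ l[j]? = some c
  | 0, _, 0, h => .inl (by simpa [eq_comm] using h)
  | 0, _, i + 1, h => .inr ⟨i, rfl, by simpa using h⟩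
  | _ + 1, [], _, h => by simp at h
  | _ + 1, _ :: _, 0, h => .inr ⟨0, rfl, by simpa using h⟩
  | k + 1, _ :: l, i + 1, h => by
      have htail : (l.insertIdx k a)[i]? = some c := by simpa using h
      rcases eq_or_exists_shiftFrom_of_getElem?_insertIdx htail with hc | ⟨j, rfl, hj⟩
      · exact .inl hc
      · exact .inr ⟨j + 1, rfl, by simpa using hj⟩

end ListInsertion

variable {Q : Type} {S : CoSig Q}

theorem vle_refl (γ : List Q) : vle S γ γ :=
  List.forall₂_same.2 fun q _ => S.le_refl q

theorem vscale_one (γ : List Q) : vscale S S.one γ = γ :=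
  List.map_id'' S.one_mul γ

@[simp]
theorem length_vadd (γ₁ γ₂ : List Q) :
    (vadd S γ₁ γ₂).length = min γ₁.length γ₂.length :=
  List.length_zipWith

@[simp]
theorem length_vscale (q : Q) (γ : List Q) : (vscale S q γ).length = γ.length :=
  List.length_map _

theorem vle.length_eq_of_vadd {γ γ₁ γ₂ : List Q} {n : ℕ} (hle : vle S γ (vadd S γ₁ γ₂))
    (h₁ : γ₁.length = n) (h₂ : γ₂.length = n) : γ.length = n := by
  rw [List.Forall₂.length_eq hle, length_vadd, h₁, h₂, min_self]

theorem replicate_zero_vadd (γ : List Q) :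
    vadd S (List.replicate γ.length S.zero) γ = γ := by
  induction γ with
  | nil => rfl
  | cons q γ ih => exact congrArg₂ List.cons ((S.add_comm _ _).trans (S.add_zero q)) ih

theorem vscale_unit_vadd_zero_cons (q : Q) (γ : List Q) :
    vadd S (vscale S q (S.one :: List.replicate γ.length S.zero)) (S.zero :: γ) = q :: γ := by
  have hscale : vscale S q (S.one :: List.replicate γ.length S.zero) =
      q :: List.replicate γ.length S.zero := by
    simp [vscale, S.mul_one, S.mul_zero]
  rw [hscale]
  exact congrArg₂ List.cons (S.add_zero q) (replicate_zero_vadd γ)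

@[simp]
theorem vadd_insertIdx_zero (k : ℕ) (γ₁ γ₂ : List Q) :
    vadd S (γ₁.insertIdx k S.zero) (γ₂.insertIdx k S.zero) =
      (vadd S γ₁ γ₂).insertIdx k S.zero := by
  simp [vadd, zipWith_insertIdx, S.add_zero]

@[simp]
theorem vscale_insertIdx_zero (k : ℕ) (q : Q) (γ : List Q) :
    vscale S q (γ.insertIdx k S.zero) = (vscale S q γ).insertIdx k S.zero := by
  simp [vscale, List.map_insertIdx, S.mul_zero]

theorem vle.insertIdx_zero {γ γ' : List Q} (hle : vle S γ γ') (k : ℕ) :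
    vle S (γ.insertIdx k S.zero) (γ'.insertIdx k S.zero) :=
  forall₂_insertIdx (S.le_refl S.zero) k hle

theorem leZero.insertIdx_zero {γ : List Q} (hzero : leZero S γ) (k : ℕ) :
    leZero S (γ.insertIdx k S.zero) := by
  intro q hq
  rcases List.eq_or_mem_of_mem_insertIdx hq with rfl | hmem
  · exact S.le_refl _
  · exact hzero q hmem

mutual

theorem VHasTy.length_eq {γ : List Q} {Γ : List (VTy Q)} {V : Val Q} {A : VTy Q} :
    VHasTy S γ Γ V A → γ.length = Γ.length
  | .var hlen _ _ _ _ => hlen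
  | .unit hlen _ => hlen
  | .thunk hM => hM.length_eq
  | .pair hV₁ hV₂ hle => hle.length_eq_of_vadd hV₁.length_eq hV₂.length_eq
  | .inl hV => hV.length_eq
  | .inr hV => hV.length_eq

theorem CHasTy.length_eq {γ : List Q} {Γ : List (VTy Q)} {M : Comp Q} {B : CTy Q} :
    CHasTy S γ Γ M B → γ.length = Γ.length
  | .lam hM => by simpa using hM.length_eq
  | .app hM hV hle => hle.length_eq_of_vadd hM.length_eq (by simpa using hV.length_eq)
  | .force hV => hV.length_eq
  | .ret hV hle => (List.Forall₂.length_eq hle).trans (by simpa using hV.length_eq)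
  | .letin hM hN hle =>
      hle.length_eq_of_vadd (by simpa using hM.length_eq) (by simpa using hN.length_eq)
  | .split hV hN hle =>
      hle.length_eq_of_vadd (by simpa using hV.length_eq) (by simpa using hN.length_eq)
  | .cpair hM₁ _ => hM₁.length_eq
  | .fst hM => hM.length_eq
  | .snd hM => hM.length_eq
  | .seq hV hM hle => hle.length_eq_of_vadd hV.length_eq hM.length_eq
  | .case hV hM₁ _ _ hle =>
      hle.length_eq_of_vadd (by simpa using hV.length_eq) (by simpa using hM₁.length_eq)

end

theorem VHasTy.weaken_var {γ : List Q} {Γ : List (VTy Q)} {x : ℕ} {A : VTy Q}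
    (hx : VHasTy S γ Γ (.var x) A) (k : ℕ) (C : VTy Q) :
    VHasTy S (γ.insertIdx k S.zero) (Γ.insertIdx k C) (.var (shiftFrom k x)) A := by
  cases hx with
  | var hlen hA hq hle hothers =>
    refine .var (by simp [List.length_insertIdx, hlen])
      ((getElem?_insertIdx_shiftFrom C k Γ x).trans hA)
      ((getElem?_insertIdx_shiftFrom S.zero k γ x).trans hq) hle fun i q' hi hq' => ?_
    rcases eq_or_exists_shiftFrom_of_getElem?_insertIdx hq' with rfl | ⟨j, rfl, hj⟩
    · exact S.le_refl _
    · exact hothers j q' (fun hjx => hi (congrArg (shiftFrom k) hjx)) hj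

mutual

theorem VHasTy.weaken {γ : List Q} {Γ : List (VTy Q)} {V : Val Q} {A : VTy Q}
    (h : VHasTy S γ Γ V A) (k : ℕ) (C : VTy Q) :
    VHasTy S (γ.insertIdx k S.zero) (Γ.insertIdx k C) (V.rename (shiftFrom k)) A := by
  cases h with
  | var hlen hA hq hle hothers => exact (VHasTy.var hlen hA hq hle hothers).weaken_var k C
  | unit hlen hzero => exact .unit (by simp [List.length_insertIdx, hlen]) (hzero.insertIdx_zero k)
  | thunk hM => exact .thunk (hM.weaken k C)
  | pair hV₁ hV₂ hle =>
    exact .pair (hV₁.weaken k C) (hV₂.weaken k C) (by simpa using hle.insertIdx_zero k)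
  | inl hV => exact .inl (hV.weaken k C)
  | inr hV => exact .inr (hV.weaken k C)

theorem CHasTy.weaken {γ : List Q} {Γ : List (VTy Q)} {M : Comp Q} {B : CTy Q}
    (h : CHasTy S γ Γ M B) (k : ℕ) (C : VTy Q) :
    CHasTy S (γ.insertIdx k S.zero) (Γ.insertIdx k C) (M.rename (shiftFrom k)) B := by
  cases h with
  | lam hM => exact .lam (hM.weaken (k + 1) C)
  | app hM hV hle =>
    exact .app (hM.weaken k C) (hV.weaken k C) (by simpa using hle.insertIdx_zero k)
  | force hV => exact .force (hV.weaken k C)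
  | ret hV hle => exact .ret (hV.weaken k C) (by simpa using hle.insertIdx_zero k)
  | letin hM hN hle =>
    -- Left implicit, `γ₂` would be inferred with `insertIdx` unfolded, out of reach of `simp`.
    exact .letin (γ₂ := .insertIdx _ k S.zero) (hM.weaken k C) (hN.weaken (k + 1) C)
      (by simpa using hle.insertIdx_zero k)
  | split hV hN hle =>
    exact .split (γ₂ := .insertIdx _ k S.zero) (hV.weaken k C) (hN.weaken (k + 2) C)
      (by simpa using hle.insertIdx_zero k)
  | cpair hM₁ hM₂ => exact .cpair (hM₁.weaken k C) (hM₂.weaken k C)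
  | fst hM => exact .fst (hM.weaken k C)
  | snd hM => exact .snd (hM.weaken k C)
  | seq hV hM hle =>
    exact .seq (hV.weaken k C) (hM.weaken k C) (by simpa using hle.insertIdx_zero k)
  | case hV hM₁ hM₂ hq hle =>
    exact .case (γ₂ := .insertIdx _ k S.zero) (hV.weaken k C) (hM₁.weaken (k + 1) C)
      (hM₂.weaken (k + 1) C) hq (by simpa using hle.insertIdx_zero k)

end

theorem VHasTy.var_zero (A : VTy Q) (Γ : List (VTy Q)) :
    VHasTy S (S.one :: List.replicate Γ.length S.zero) (A :: Γ) (.var 0) A := by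
  refine .var (by simp) rfl rfl (S.le_refl _) fun i q' hi hq' => ?_
  obtain ⟨j, rfl⟩ := Nat.exists_eq_succ_of_ne_zero hi
  have hmem : q' ∈ List.replicate Γ.length S.zero := List.mem_of_getElem? hq'
  rw [List.eq_of_mem_replicate hmem]
  exact S.le_refl _

section DerivedRules

variable {γ γ₁ γ₂ : List Q} {Γ : List (VTy Q)} {q : Q} {A A₁ A₂ : VTy Q} {B : CTy Q}

theorem CHasTy.ret_one {V : Val Q} (hV : VHasTy S γ Γ V A) :
    CHasTy S γ Γ (.ret S.one V) (.F S.one A) :=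
  .ret hV (by simpa only [vscale_one] using vle_refl γ)

theorem CHasTy.letin_of_F_one {M N : Comp Q} (hM : CHasTy S γ₁ Γ M (.F S.one A))
    (hN : CHasTy S (q :: γ₂) (A :: Γ) N B) (hle : vle S γ (vadd S (vscale S q γ₁) γ₂)) :
    CHasTy S γ Γ (.letin q M N) B :=
  .letin hM (by rwa [S.one_mul]) hle

theorem CHasTy.seq_var_zero {M : Comp Q} (hM : CHasTy S γ Γ M B) :
    CHasTy S (S.one :: γ) (.unit :: Γ) (.seq (.var 0) (shift M)) B := by
  refine .seq (.var_zero .unit Γ) (hM.weaken 0 .unit) ?_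
  have hsum := vscale_unit_vadd_zero_cons (S := S) S.one γ
  rw [vscale_one, hM.length_eq] at hsum
  exact hsum.symm ▸ vle_refl _

theorem CHasTy.case_var_zero {M₁ M₂ : Comp Q} (hM₁ : CHasTy S (q :: γ) (A₁ :: Γ) M₁ B)
    (hM₂ : CHasTy S (q :: γ) (A₂ :: Γ) M₂ B) (hq : S.le q S.one) :
    CHasTy S (q :: γ) (.sum A₁ A₂ :: Γ) (.case q (.var 0) (shift1 M₁) (shift1 M₂)) B := by
  refine .case (.var_zero (.sum A₁ A₂) Γ) (hM₁.weaken 1 _) (hM₂.weaken 1 _) hq ?_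
  have hlen : γ.length = Γ.length := by simpa using hM₁.length_eq
  rw [← hlen]
  exact (vscale_unit_vadd_zero_cons q γ).symm ▸ vle_refl _

end DerivedRules

end CBPVCo

/-- Type-and-coeffect preservation of the CBN translation of the graded
λ-calculus: if `γ·Γ ⊢ e : τ` in the graded source λ-calculus, then
`γ·⟦Γ⟧n ⊢ ⟦e⟧n : ⟦τ⟧n` in CBPV with coeffects, with the same grade vector `γ`. -/
theorem cbn_graded_translation_preservation {Q : Type} (S : CoSig Q)
    {γ : List Q} {Γ : List (STy Q)} {e : STm Q} {τ : STy Q}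
    (h : LamCo.HasTy S γ Γ e τ) :
    CHasTy S γ (Γ.map (fun τ' => VTy.thunk (tyTransN S τ'))) (tmTransN S e)
      (tyTransN S τ) := by
  induction h with
  | var hlen hτ hq hle hothers =>
    exact .force (.var (by simpa using hlen) (by simp [hτ]) hq hle hothers)
  | lam _ ih => exact .lam ih
  | app _ _ hle ih₁ ih₂ => exact .app ih₁ (.thunk ih₂) hle
  | unit hlen hzero => exact .ret_one (.unit (by simpa using hlen) hzero)
  | seq _ _ hle ih₁ ih₂ => exact .letin_of_F_one ih₁ ih₂.seq_var_zero (by rwa [vscale_one])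
  | wpair _ _ ih₁ ih₂ => exact .cpair ih₁ ih₂
  | fst _ ih => exact .fst ih
  | snd _ ih => exact .snd ih
  | inl _ ih => exact .ret_one (.inl (.thunk ih))
  | inr _ ih => exact .ret_one (.inr (.thunk ih))
  | case _ _ _ hq hle ih ih₁ ih₂ => exact .letin_of_F_one ih (ih₁.case_var_zero ih₂ hq) hle
  | box _ hle ih => exact .ret (.thunk ih) hle
  | unbox _ _ hle ih₁ ih₂ => exact .letin ih₁ ih₂ hle
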